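/- Let x_1,…,x_n, u, v, t be indeterminates, and with notation Φ, R, T as before, T( Φ · ∏_{i=1}^n ((1-t u/x_i)/(1-u/x_i)) · ((1-t v/x_i)/(1-v/x_i)) ) = ∏_{i=1}^{n-2}(t^i+1) · ( t^{2n-1}(1-t^2 u v)/(1-t u v) + t^{n-1} ((u-t v)/(u-v)) R(u) + t^{n-1} ((v-t u)/(v-u)) R(v) + ((1-u v)/(1-t u v)) R(u) R(v) ). -/

import Mathlib

open Finset

/-- `x_i^{σ_i}`: the variable `x i` raised to the sign `σ i` (`true` = `+1`). -/
def sgnVar {F : Type*} [Field F] {n : ℕ} (x : Fin n → F) (σ : Fin n → Bool) (i : Fin n) : F :=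
  if σ i then x i else (x i)⁻¹

/-- `Φ = ∏_i (1-tx_i²)/(1-x_i²) ∏_{i<j} (1-tx_ix_j)/(1-x_ix_j)`. -/
def PhiC {F : Type*} [Field F] {n : ℕ} (t : F) (x : Fin n → F) : F :=
  (∏ i, (1 - t * x i ^ 2) / (1 - x i ^ 2)) *
    ∏ i, ∏ j ∈ Finset.Ioi i, (1 - t * x i * x j) / (1 - x i * x j)

/-- `R(u) = ∏_i ((1-tux_i)/(1-ux_i)) ((1-tu/x_i)/(1-u/x_i))`. -/
def RC {F : Type*} [Field F] {n : ℕ} (t : F) (x : Fin n → F) (u : F) : F :=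
  ∏ i, ((1 - t * u * x i) / (1 - u * x i)) * ((1 - t * u / x i) / (1 - u / x i))

/-!
The product of `1 - u / x_i` with `1 - u x_i` is invariant under `x_i ↦ 1 / x_i`, so applying `T`
gives `S(u) / D(u)` with `D(u) = ∏ (u - x_i) (u - 1 / x_i)` and `S` a polynomial of degree at most
`2n`; moreover `R(u) = D(t u) / D(u)`. At `u = x_k^{±1}` only half of the terms survive, and `S(u)`
is an explicit factor times the corresponding sum without the `k`-th variable.

With the single parameter `u`, these `2n` values and the leading coefficient express `S` through
`D(u)`, `D(t u)` and `T(Φ)`, once `T(Φ)` is known for `n - 1` variables. The value at `u = 0` is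
then a recursion for `T(Φ)`, solvable when `t ^ n ≠ 1`; since `T(Φ)` is polynomial in `t`, the
resulting product formula holds for all `t`. With a second parameter `v`, multiply `S` by
`(u - v) (1 - t u v)`: the values at `x_k^{±1}`, given by the one-parameter case for `n - 1`
variables, those at `0` and `v`, and the leading coefficient determine this polynomial.
-/

theorem prod_prod_Ioi_succAbove {M : Type*} [CommMonoid M] {n : ℕ} (k : Fin (n + 1))
    {c : Fin (n + 1) → Fin (n + 1) → M} (hc : ∀ i j, c i j = c j i) :
    ∏ i, ∏ j ∈ Ioi i, c i j =
      (∏ i, c k (k.succAbove i)) * ∏ i, ∏ j ∈ Ioi i, c (k.succAbove i) (k.succAbove j) := by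
  have prod_Ioi {m : ℕ} (i : Fin m) (f : Fin m → M) :
      ∏ j ∈ Ioi i, f j = ∏ j, if i < j then f j else 1 := by
    rw [← prod_filter, filter_lt_eq_Ioi]
  have prod_cross : ∏ i, c k (k.succAbove i) =
      (∏ i, if k < k.succAbove i then c k (k.succAbove i) else 1) *
        ∏ i, if k.succAbove i < k then c (k.succAbove i) k else 1 := by
    rw [← prod_mul_distrib]
    refine prod_congr rfl fun i _ => ?_
    rcases lt_or_gt_of_ne (Fin.succAbove_ne k i) with h | h <;> simp [h, h.not_gt, hc k]
  simp only [prod_Ioi, prod_cross, Fin.prod_univ_succAbove _ k, lt_irrefl, if_false, one_mul,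
    prod_mul_distrib, Fin.succAbove_lt_succAbove_iff, mul_assoc]

section

open Polynomial

variable {F : Type*} [Field F] {n : ℕ}

theorem PhiC_eq_mul_removeNth (t : F) (y : Fin (n + 1) → F) (k : Fin (n + 1)) :
    PhiC t y = (1 - t * y k ^ 2) / (1 - y k ^ 2) *
      (∏ i, (1 - t * y k * k.removeNth y i) / (1 - y k * k.removeNth y i)) *
        PhiC t (k.removeNth y) := by
  unfold PhiC Fin.removeNth
  rw [prod_prod_Ioi_succAbove k fun i j => by rw [mul_right_comm, mul_comm (y i)],
    Fin.prod_univ_succAbove _ k]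
  ac_rfl

/-- The `2n` numbers `x_i^{±1}`, indexed by a position and a sign (`true` = `+1`). -/
def signedVar (x : Fin n → F) (p : Fin n × Bool) : F :=
  if p.2 then x p.1 else (x p.1)⁻¹

theorem sgnVar_apply (x : Fin n → F) (σ : Fin n → Bool) (i : Fin n) :
    sgnVar x σ i = signedVar x (i, σ i) := rfl

theorem signedVar_not (x : Fin n → F) (i : Fin n) (b : Bool) :
    signedVar x (i, !b) = (signedVar x (i, b))⁻¹ := by
  cases b <;> simp [signedVar]

theorem prod_signedVar_comm {M : Type*} [CommMonoid M] (f : F → M) (x : Fin n → F) (i : Fin n)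
    (b : Bool) : f (signedVar x (i, true)) * f (signedVar x (i, false)) =
      f (signedVar x (i, b)) * f (signedVar x (i, b))⁻¹ := by
  cases b <;> simp [signedVar, mul_comm]

theorem signedVar_injective_of_ne {x : Fin n → F} (hx0 : ∀ i, x i ≠ 0) (hx2 : ∀ i, x i ^ 2 ≠ 1)
    (hxx : ∀ i j, i ≠ j → x i * x j ≠ 1 ∧ x i ≠ x j) : Function.Injective (signedVar x) := by
  have mul_ne_one (i j) : x i * x j ≠ 1 := by
    rcases eq_or_ne i j with rfl | hij
    exacts [sq (x i) ▸ hx2 i, (hxx i j hij).1]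
  have inj : Function.Injective x := fun i j h => by_contra fun hij => (hxx i j hij).2 h
  rintro ⟨i, _ | _⟩ ⟨j, _ | _⟩ h
  · simpa [signedVar, inj.eq_iff] using h
  · exact absurd ((mul_eq_one_iff_eq_inv₀ (hx0 i)).2 h.symm) (mul_ne_one j i)
  · exact absurd ((mul_eq_one_iff_eq_inv₀ (hx0 j)).2 h) (mul_ne_one i j)
  · simpa [signedVar, inj.eq_iff] using h

theorem signedVar_ne_zero {x : Fin n → F} (hx : Function.Injective (signedVar x))
    (p : Fin n × Bool) : signedVar x p ≠ 0 := by
  intro h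
  have : p = (p.1, !p.2) := hx (by rw [signedVar_not, h, inv_zero])
  exact Bool.self_ne_not p.2 (congrArg Prod.snd this)

theorem signedVar_mul_ne_one {x : Fin n → F} (hx : Function.Injective (signedVar x))
    {p q : Fin n × Bool} (hpq : q ≠ (p.1, !p.2)) :
    signedVar x p * signedVar x q ≠ 1 := fun h =>
  hpq <| hx <| by rw [signedVar_not, eq_inv_of_mul_eq_one_right h]

theorem signedVar_removeNth_injective {x : Fin (n + 1) → F}
    (hx : Function.Injective (signedVar x)) (k : Fin (n + 1)) :
    Function.Injective (signedVar (k.removeNth x)) := by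
  rintro ⟨i, b⟩ ⟨j, c⟩ h
  simpa using hx (a₁ := (k.succAbove i, b)) (a₂ := (k.succAbove j, c)) h

/-- The monic polynomial `∏_i (u - x_i) (u - 1 / x_i)`; for nonzero `x_i` it is the denominator
of `R(u)`, and its value at `t u` is the numerator. -/
noncomputable def signedPoly (x : Fin n → F) : F[X] :=
  ∏ p, (X - C (signedVar x p))

theorem eval_signedPoly (x : Fin n → F) (u : F) :
    (signedPoly x).eval u = ∏ p, (u - signedVar x p) := by
  simp [signedPoly, eval_prod]

theorem natDegree_signedPoly (x : Fin n → F) : (signedPoly x).natDegree = 2 * n := by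
  simp [signedPoly, natDegree_finsetProd_X_sub_C_eq_card, mul_comm]

theorem coeff_signedPoly (x : Fin n → F) : (signedPoly x).coeff (2 * n) = 1 := by
  rw [← natDegree_signedPoly x]
  exact monic_prod_X_sub_C _ _

theorem eval_signedPoly_signedVar (x : Fin n → F) (p : Fin n × Bool) :
    (signedPoly x).eval (signedVar x p) = 0 := by
  rw [eval_signedPoly]
  exact prod_eq_zero (mem_univ p) (sub_self _)

theorem eval_signedPoly_eq_prod (x : Fin n → F) (σ : Fin n → Bool) (u : F) :
    (signedPoly x).eval u = ∏ i, (u - sgnVar x σ i) * (u - (sgnVar x σ i)⁻¹) := by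
  simp only [eval_signedPoly, Fintype.prod_prod_type, Fintype.prod_bool, sgnVar_apply]
  exact prod_congr rfl fun i _ => prod_signedVar_comm (u - ·) x i (σ i)

theorem eval_signedPoly_zero {x : Fin n → F} (hx : Function.Injective (signedVar x)) :
    (signedPoly x).eval 0 = 1 := by
  rw [eval_signedPoly_eq_prod x fun _ => true]
  refine prod_eq_one fun i _ => ?_
  rw [zero_sub, zero_sub, neg_mul_neg, mul_inv_cancel₀]
  exact signedVar_ne_zero hx (i, true)

theorem eval_signedPoly_removeNth (x : Fin (n + 1) → F) (p : Fin (n + 1) × Bool) (u : F) :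
    (signedPoly x).eval u = (u - signedVar x p) * (u - (signedVar x p)⁻¹) *
      (signedPoly (p.1.removeNth x)).eval u := by
  simp only [eval_signedPoly_eq_prod _ fun _ => p.2, Fin.prod_univ_succAbove _ p.1]
  rfl

/-- The factor `(1 - t u / y) / (1 - u / y)` of the summand, multiplied by
`(1 - u / y) (1 - u y)`, as a polynomial in `u`. -/
noncomputable def factorPoly (t y : F) : F[X] :=
  (1 - C (t * y⁻¹) * X) * (1 - C y * X)

theorem eval_factorPoly (t y u : F) :
    (factorPoly t y).eval u = (1 - t * y⁻¹ * u) * (1 - y * u) := by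
  simp [factorPoly]

theorem natDegree_factorPoly_le (t y : F) : (factorPoly t y).natDegree ≤ 2 := by
  unfold factorPoly
  compute_degree

theorem coeff_factorPoly (t : F) {y : F} (hy : y ≠ 0) : (factorPoly t y).coeff 2 = t := by
  unfold factorPoly
  compute_degree!
  simp [hy]

/-- The operator `T` applied to `Φ · ∏_i g(x_i)`; values in an algebra allow the weight `g` to
carry the variable `u`. -/
def signSum {R : Type*} [CommSemiring R] [Algebra F R] (t : F) (x : Fin n → F) (g : F → R) : R :=
  ∑ σ : Fin n → Bool, PhiC t (sgnVar x σ) • ∏ i, g (sgnVar x σ i)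

section SignSum
variable {R : Type*} [CommSemiring R] [Algebra F R]

theorem map_signSum {S : Type*} [CommSemiring S] [Algebra F S] (φ : R →ₐ[F] S) (t : F)
    (x : Fin n → F) (g : F → R) : φ (signSum t x g) = signSum t x fun y => φ (g y) := by
  simp [signSum]

theorem signSum_congr (t : F) {x : Fin n → F} {g h : F → R}
    (hgh : ∀ p, g (signedVar x p) = h (signedVar x p)) : signSum t x g = signSum t x h := by
  simp only [signSum, sgnVar_apply, hgh]

theorem signSum_mul_of_inv (t : F) (x : Fin n → F) {g : F → R} (hg : ∀ y, g y⁻¹ = g y)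
    (h : F → R) : signSum t x (fun y => g y * h y) = (∏ i, g (x i)) * signSum t x h := by
  have hgx (σ : Fin n → Bool) (i : Fin n) : g (sgnVar x σ i) = g (x i) := by
    unfold sgnVar
    split_ifs <;> simp [hg]
  simp only [signSum, prod_mul_distrib, hgx, mul_sum, mul_smul_comm]

theorem signSum_removeNth (t : F) (x : Fin (n + 1) → F) (k : Fin (n + 1)) (g : F → F) :
    signSum t x g = ∑ b, (1 - t * signedVar x (k, b) ^ 2) / (1 - signedVar x (k, b) ^ 2) *
      g (signedVar x (k, b)) * signSum t (k.removeNth x) fun y =>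
        (1 - t * signedVar x (k, b) * y) / (1 - signedVar x (k, b) * y) * g y := by
  have sgnVar_self (b σ) : sgnVar x (k.insertNth b σ) k = signedVar x (k, b) := by
    simp [sgnVar_apply]
  have sgnVar_removeNth (b σ) :
      k.removeNth (sgnVar x (k.insertNth b σ)) = sgnVar (k.removeNth x) σ := by
    ext i
    simp [Fin.removeNth, sgnVar]
  have prod_removeNth (y : Fin (n + 1) → F) : ∏ i, g (y i) = g (y k) * ∏ i, g (k.removeNth y i) :=
    Fin.prod_univ_succAbove _ k
  simp only [signSum, smul_eq_mul, mul_sum]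
  rw [← (Fin.insertNthEquiv (fun _ => Bool) k).sum_comp, Fintype.sum_prod_type]
  refine sum_congr rfl fun b _ => sum_congr rfl fun σ _ => ?_
  change PhiC t (sgnVar x (k.insertNth b σ)) * ∏ i, g (sgnVar x (k.insertNth b σ) i) = _
  rw [PhiC_eq_mul_removeNth t _ k, prod_removeNth, sgnVar_self, sgnVar_removeNth, prod_mul_distrib]
  ring

end SignSum

/-- The polynomial `T(Φ · ∏_i c(x_i) (1 - t u / x_i) (1 - u x_i))` in `u`. -/
noncomputable def signSumPoly (t : F) (x : Fin n → F) (c : F → F) : F[X] :=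
  signSum t x fun y => c y • factorPoly t y

theorem eval_signSumPoly (t : F) (x : Fin n → F) (c : F → F) (u : F) :
    (signSumPoly t x c).eval u = signSum t x fun y => c y * (factorPoly t y).eval u := by
  rw [← coe_aeval_eq_eval, signSumPoly, map_signSum]
  simp

theorem eval_signSumPoly_zero (t : F) (x : Fin n → F) (c : F → F) :
    (signSumPoly t x c).eval 0 = signSum t x c := by
  simp [eval_signSumPoly, eval_factorPoly]

theorem natDegree_smul_factorPoly_le (c t y : F) : (c • factorPoly t y).natDegree ≤ 2 :=
  (natDegree_smul_le _ _).trans (natDegree_factorPoly_le t y)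

theorem natDegree_signSumPoly_le (t : F) (x : Fin n → F) (c : F → F) :
    (signSumPoly t x c).natDegree ≤ 2 * n := by
  refine natDegree_sum_le_of_forall_le _ _ fun σ _ => (natDegree_smul_le _ _).trans ?_
  refine (natDegree_prod_le _ _).trans ((sum_le_card_nsmul _ _ 2 fun i _ => ?_).trans_eq ?_)
  · exact natDegree_smul_factorPoly_le _ _ _
  · simp [mul_comm]

theorem coeff_signSumPoly (t : F) {x : Fin n → F} (hx : Function.Injective (signedVar x))
    (c : F → F) : (signSumPoly t x c).coeff (2 * n) = t ^ n * signSum t x c := by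
  have coeff_prod (σ : Fin n → Bool) :
      (∏ i, c (sgnVar x σ i) • factorPoly t (sgnVar x σ i)).coeff (2 * n) =
        t ^ n * ∏ i, c (sgnVar x σ i) := by
    have h := coeff_prod_of_natDegree_le univ
      (fun i => c (sgnVar x σ i) • factorPoly t (sgnVar x σ i)) 2
      fun i _ => natDegree_smul_factorPoly_le _ _ _
    rw [card_univ, Fintype.card_fin, mul_comm n] at h
    simp only [h, coeff_smul, smul_eq_mul, prod_mul_distrib, mul_comm (t ^ n)]
    simp only [sgnVar_apply, coeff_factorPoly t (signedVar_ne_zero hx _), Fin.prod_const]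
  simp only [signSumPoly, signSum, finsetSum_coeff, coeff_smul, coeff_prod, smul_eq_mul, mul_sum,
    mul_left_comm]

/-- Setting `u = x_k^{±1}` kills the terms in which the `k`-th variable is `1 / u`; in the others
the factors `1 - u y` cancel the denominators of `Φ` that involve the `k`-th variable. -/
theorem eval_signSumPoly_signedVar (t : F) {x : Fin (n + 1) → F}
    (hx : Function.Injective (signedVar x)) (c : F → F) (p : Fin (n + 1) × Bool) :
    (signSumPoly t x c).eval (signedVar x p) =
      (signedPoly x).eval (t * signedVar x p) * c (signedVar x p) *
        signSum t (p.1.removeNth x) c := by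
  obtain ⟨k, b⟩ := p
  set a := signedVar x (k, b) with ha
  have ha0 : a ≠ 0 := signedVar_ne_zero hx _
  have ha2 : 1 - a ^ 2 ≠ 0 := by
    rw [sq, sub_ne_zero]
    exact (signedVar_mul_ne_one hx fun h => Bool.self_ne_not b (congrArg Prod.snd h)).symm
  have vanish : (factorPoly t a⁻¹).eval a = 0 := by
    simp [eval_factorPoly, ha0]
  have cancel (q : Fin n × Bool) (y : F) (hy : y = signedVar (k.removeNth x) q) :
      (1 - t * a * y) / (1 - a * y) * (c y * (factorPoly t y).eval a) =
        (t * a - y) * (t * a - y⁻¹) * c y := by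
    have hy0 : y ≠ 0 := hy ▸ signedVar_ne_zero (signedVar_removeNth_injective hx k) q
    have hay : 1 - a * y ≠ 0 := sub_ne_zero.2 <| Ne.symm <| hy ▸
      signedVar_mul_ne_one hx (p := (k, b)) (q := (k.succAbove q.1, q.2)) (by simp)
    rw [eval_factorPoly, mul_comm y a]
    field_simp
    ring
  rw [eval_signSumPoly, signSum_removeNth t x k, Fintype.sum_eq_single b, ← ha,
    signSum_congr t (h := fun y => (t * a - y) * (t * a - y⁻¹) * c y) fun q => cancel q _ rfl,
    signSum_mul_of_inv t _ fun y => by rw [inv_inv, mul_comm],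
    eval_signedPoly_removeNth x (k, b), eval_signedPoly_eq_prod _ fun _ => true, ← ha,
    eval_factorPoly]
  · simp only [sgnVar, if_true]
    field_simp
    ring
  · intro b' hb'
    rw [Bool.eq_not_of_ne hb', signedVar_not, ← ha, vanish]
    simp

theorem eq_of_eval_eq_of_coeff_eq {R ι : Type*} [CommRing R] [IsDomain R] [Fintype ι]
    {p q : R[X]} {a : ι → R} {d : ℕ}
    (ha : Function.Injective a) (hd : Fintype.card ι = d) (hp : p.natDegree ≤ d)
    (hq : q.natDegree ≤ d) (hc : p.coeff d = q.coeff d)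
    (h : ∀ i, p.eval (a i) = q.eval (a i)) : p = q := by
  refine eq_of_degree_sub_lt_of_eval_index_eq univ ha.injOn ?_ fun i _ => h i
  rw [card_univ, hd, degree_lt_iff_coeff_zero]
  intro m hm
  rw [coeff_sub, sub_eq_zero]
  rcases hm.eq_or_lt with rfl | hm
  · exact hc
  · rw [coeff_eq_zero_of_natDegree_lt (hp.trans_lt hm),
      coeff_eq_zero_of_natDegree_lt (hq.trans_lt hm)]

theorem natDegree_signedPoly_comp_le (t : F) (x : Fin n → F) :
    ((signedPoly x).comp (C t * X)).natDegree ≤ 2 * n := by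
  refine natDegree_comp_le.trans ?_
  rw [natDegree_signedPoly]
  exact mul_le_of_le_one_right (Nat.zero_le _) (by compute_degree)

theorem eval_signedPoly_comp (t : F) (x : Fin n → F) (u : F) :
    ((signedPoly x).comp (C t * X)).eval u = (signedPoly x).eval (t * u) := by
  simp

theorem natDegree_mul_signedPoly_add_le (t : F) (x : Fin n → F) {d : ℕ} {A B : F[X]}
    (hA : A.natDegree ≤ d) (hB : B.natDegree ≤ d) :
    (A * signedPoly x + B * (signedPoly x).comp (C t * X)).natDegree ≤ d + 2 * n :=
  natDegree_add_le_of_degree_le (natDegree_mul_le_of_le hA (natDegree_signedPoly x).le)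
    (natDegree_mul_le_of_le hB (natDegree_signedPoly_comp_le t x))

theorem coeff_mul_signedPoly_add (t : F) (x : Fin n → F) {d : ℕ} {A B : F[X]}
    (hA : A.natDegree ≤ d) (hB : B.natDegree ≤ d) :
    (A * signedPoly x + B * (signedPoly x).comp (C t * X)).coeff (d + 2 * n) =
      A.coeff d + B.coeff d * t ^ (2 * n) := by
  rw [coeff_add, coeff_mul_add_eq_of_natDegree_le hA (natDegree_signedPoly x).le,
    coeff_mul_add_eq_of_natDegree_le hB (natDegree_signedPoly_comp_le t x), comp_C_mul_X_coeff,
    coeff_signedPoly, mul_one, one_mul]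

/-- The `q`-Pochhammer symbol `(-t; t)_n = ∏_{i=1}^n (1 + t^i)`, the value of `T(Φ)`. -/
def negPochhammer {R : Type*} [CommSemiring R] (t : R) (n : ℕ) : R :=
  ∏ i ∈ range n, (t ^ (i + 1) + 1)

theorem negPochhammer_succ {R : Type*} [CommSemiring R] (t : R) (n : ℕ) :
    negPochhammer t (n + 1) = negPochhammer t n * (t ^ (n + 1) + 1) :=
  prod_range_succ _ n

theorem signSumPoly_one_of_removeNth (t : F) {x : Fin (n + 1) → F}
    (hx : Function.Injective (signedVar x)) {w : F}
    (hw : ∀ k : Fin (n + 1), signSum t (k.removeNth x) (1 : F → F) = w) :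
    signSumPoly t x 1 = C (t ^ (n + 1) * (signSum t x (1 : F → F) - t ^ (n + 1) * w)) *
      signedPoly x + C w * (signedPoly x).comp (C t * X) := by
  refine eq_of_eval_eq_of_coeff_eq hx (d := 0 + 2 * (n + 1)) (by simp [mul_comm])
    (by simpa using natDegree_signSumPoly_le t x 1)
    (natDegree_mul_signedPoly_add_le t x (natDegree_C _).le (natDegree_C _).le) ?_ fun p => ?_
  · rw [coeff_mul_signedPoly_add t x (natDegree_C _).le (natDegree_C _).le, zero_add,
      coeff_signSumPoly t hx, coeff_C_zero, coeff_C_zero]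
    ring
  · rw [eval_signSumPoly_signedVar t hx, hw, eval_add, eval_mul, eval_mul, eval_C, eval_C,
      eval_signedPoly_comp, eval_signedPoly_signedVar, Pi.one_apply]
    ring

theorem signSum_one_of_not_isOfFinOrder {t : F} (ht : ¬IsOfFinOrder t) {x : Fin n → F}
    (hx : Function.Injective (signedVar x)) :
    signSum t x (1 : F → F) = negPochhammer t n := by
  induction n with
  | zero => simp [signSum, PhiC, negPochhammer]
  | succ n ih =>
    have at_zero := congrArg (eval 0) <| signSumPoly_one_of_removeNth t hx fun k =>
      ih (signedVar_removeNth_injective hx k)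
    rw [eval_signSumPoly_zero, eval_add, eval_mul, eval_mul, eval_C, eval_C, eval_signedPoly_comp,
      mul_zero, eval_signedPoly_zero hx] at at_zero
    have ht1 : 1 - t ^ (n + 1) ≠ 0 := fun h => ht <|
      isOfFinOrder_iff_pow_eq_one.2 ⟨n + 1, n.succ_pos, (sub_eq_zero.1 h).symm⟩
    rw [negPochhammer_succ]
    apply mul_left_cancel₀ ht1
    linear_combination at_zero

/-- `Φ` as a polynomial in `t`. -/
noncomputable def PhiPoly (y : Fin n → F) : F[X] :=
  (∏ i, (1 - X * C (y i ^ 2)) * C (1 - y i ^ 2)⁻¹) *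
    ∏ i, ∏ j ∈ Ioi i, (1 - X * C (y i) * C (y j)) * C (1 - y i * y j)⁻¹

theorem aeval_PhiPoly {K : Type*} [Field K] [Algebra F K] (s : K) (y : Fin n → F) :
    aeval s (PhiPoly y) = PhiC s fun i => algebraMap F K (y i) := by
  simp only [PhiPoly, PhiC, div_eq_mul_inv, map_mul, map_prod, map_sub, map_one, map_pow, map_inv₀,
    aeval_X, aeval_C]

theorem not_isOfFinOrder_of_transcendental {R A : Type*} [CommRing R] [Nontrivial R] [Ring A]
    [Algebra R A] {a : A} (ha : Transcendental R a) : ¬IsOfFinOrder a := fun h => by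
  obtain ⟨k, hk, hak⟩ := isOfFinOrder_iff_pow_eq_one.1 h
  exact ha ⟨X ^ k - 1, X_pow_sub_C_ne_zero hk 1, by simp [hak]⟩

theorem aeval_sum_PhiPoly {K : Type*} [Field K] [Algebra F K] (s : K) (x : Fin n → F) :
    aeval s (∑ σ, PhiPoly (sgnVar x σ)) =
      signSum s (fun i => algebraMap F K (x i)) (1 : K → K) := by
  have map_sgnVar (σ) : (fun i => algebraMap F K (sgnVar x σ i)) =
      sgnVar (fun i => algebraMap F K (x i)) σ := by
    ext i
    simp only [sgnVar, apply_ite (algebraMap F K), map_inv₀]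
  simp [signSum, aeval_PhiPoly, map_sgnVar]

theorem signSum_one (t : F) {x : Fin n → F} (hx : Function.Injective (signedVar x)) :
    signSum t x (1 : F → F) = negPochhammer t n := by
  have hx' : Function.Injective (signedVar fun i => algebraMap F (RatFunc F) (x i)) := by
    convert (algebraMap F (RatFunc F)).injective.comp hx using 1
    ext p
    simp only [signedVar, Function.comp_apply, apply_ite (algebraMap F (RatFunc F)), map_inv₀]
  have poly_eq : ∑ σ, PhiPoly (sgnVar x σ) = negPochhammer (X : F[X]) n := by
    rw [← sub_eq_zero]
    refine transcendental_iff.1 (RatFunc.transcendental_X (K := F)) _ ?_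
    rw [map_sub, aeval_sum_PhiPoly, signSum_one_of_not_isOfFinOrder
      (not_isOfFinOrder_of_transcendental RatFunc.transcendental_X) hx']
    simp [negPochhammer]
  have at_t := congrArg (aeval t) poly_eq
  rw [aeval_sum_PhiPoly] at at_t
  simpa [negPochhammer] using at_t

theorem signSumPoly_one (t : F) {x : Fin (n + 1) → F} (hx : Function.Injective (signedVar x)) :
    signSumPoly t x 1 = C (negPochhammer t n) *
      (C (t ^ (n + 1)) * signedPoly x + (signedPoly x).comp (C t * X)) := by
  rw [signSumPoly_one_of_removeNth t hx fun k => signSum_one t (signedVar_removeNth_injective hx k),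
    signSum_one t hx, negPochhammer_succ]
  simp only [C_mul, C_sub, C_add, C_1]
  ring

theorem signSum_eval_factorPoly (t v : F) {x : Fin (n + 1) → F}
    (hx : Function.Injective (signedVar x)) :
    (signSum t x fun y => (factorPoly t y).eval v) = negPochhammer t n *
      (t ^ (n + 1) * (signedPoly x).eval v + (signedPoly x).eval (t * v)) := by
  have h := congrArg (eval v) (signSumPoly_one t hx)
  simpa only [eval_signSumPoly, Pi.one_apply, one_mul, eval_mul, eval_add, eval_C,
    eval_signedPoly_comp] using h

/-- The coefficient of `D(u) = signedPoly x` in the two-parameter sum for `m + 2` variables, up to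
the factor `(-t; t)_m` and after multiplication by `(u - v) (1 - t u v)`; here `D` and `N` stand for
the values of `signedPoly x` at `v` and `t v`, so that `R(v) = N / D`. -/
noncomputable def denCoeff (t v D N : F) (m : ℕ) : F[X] :=
  C (t ^ (2 * m + 3) * D) * ((1 - C (t ^ 2 * v) * X) * (X - C v)) -
    C (t ^ (m + 1) * N) * ((C v - C t * X) * (1 - C (t * v) * X))

/-- The coefficient of `D(t u)`, the numerator of `R(u)`, in the two-parameter sum; the parameters
are those of `denCoeff`. -/
noncomputable def numCoeff (t v D N : F) (m : ℕ) : F[X] :=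
  C (t ^ (m + 1) * D) * ((X - C (t * v)) * (1 - C (t * v) * X)) +
    C N * ((1 - C v * X) * (X - C v))

section Coeff
variable (t v D N : F) (m : ℕ)

theorem natDegree_denCoeff_le : (denCoeff t v D N m).natDegree ≤ 2 := by
  unfold denCoeff
  compute_degree

theorem natDegree_numCoeff_le : (numCoeff t v D N m).natDegree ≤ 2 := by
  unfold numCoeff
  compute_degree

theorem coeff_denCoeff :
    (denCoeff t v D N m).coeff 2 = -(t ^ (m + 3) * v) * (t ^ (m + 2) * D + N) := by
  unfold denCoeff
  compute_degree!
  ring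

theorem coeff_numCoeff : (numCoeff t v D N m).coeff 2 = -v * (t ^ (m + 2) * D + N) := by
  unfold numCoeff
  compute_degree!
  ring

theorem eval_denCoeff (u : F) : (denCoeff t v D N m).eval u =
    t ^ (2 * m + 3) * D * ((1 - t ^ 2 * v * u) * (u - v)) -
      t ^ (m + 1) * N * ((v - t * u) * (1 - t * v * u)) := by
  simp [denCoeff]

theorem eval_numCoeff (u : F) : (numCoeff t v D N m).eval u =
    t ^ (m + 1) * D * ((u - t * v) * (1 - t * v * u)) + N * ((1 - v * u) * (u - v)) := by
  simp [numCoeff]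

end Coeff

/-- The interpolation points `0`, `v` and `x_i^{±1}` for the case `r = 2`. -/
def interpolationNode (x : Fin n → F) (v : F) : Option (Option (Fin n × Bool)) → F
  | none => 0
  | some none => v
  | some (some p) => signedVar x p

theorem interpolationNode_injective {x : Fin n → F} (hx : Function.Injective (signedVar x)) {v : F}
    (hv0 : v ≠ 0) (hv : ∀ p, v ≠ signedVar x p) : Function.Injective (interpolationNode x v) := by
  refine Option.injective_iff.2 ⟨Option.injective_iff.2 ⟨hx, ?_⟩, ?_⟩
  · rintro ⟨p, hp⟩
    exact hv p hp.symm
  · rintro ⟨_ | p, hp⟩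
    exacts [hv0 hp, signedVar_ne_zero hx p hp]

theorem mul_signSumPoly_eval_factorPoly (t : F) {v : F} {m : ℕ} {x : Fin (m + 2) → F}
    (hx : Function.Injective (signedVar x)) (hv0 : v ≠ 0) (hv : ∀ p, v ≠ signedVar x p) :
    (X - C v) * (1 - C (t * v) * X) * signSumPoly t x (fun y => (factorPoly t y).eval v) =
      C (negPochhammer t m) *
        (denCoeff t v ((signedPoly x).eval v) ((signedPoly x).eval (t * v)) m * signedPoly x +
          numCoeff t v ((signedPoly x).eval v) ((signedPoly x).eval (t * v)) m *
            (signedPoly x).comp (C t * X)) := by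
  set D := (signedPoly x).eval v with hD
  set N := (signedPoly x).eval (t * v) with hN
  have hsum : (signSum t x fun y => (factorPoly t y).eval v) =
      negPochhammer t m * (t ^ (m + 1) + 1) * (t ^ (m + 2) * D + N) := by
    rw [signSum_eval_factorPoly t v hx, negPochhammer_succ]
  have natDegree_left : ((X - C v) * (1 - C (t * v) * X)).natDegree ≤ 2 := by compute_degree
  have coeff_left : ((X - C v) * (1 - C (t * v) * X)).coeff 2 = -(t * v) := by
    compute_degree!
  refine eq_of_eval_eq_of_coeff_eq (interpolationNode_injective hx hv0 hv) (d := 2 + 2 * (m + 2)) ?_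
    (natDegree_mul_le_of_le natDegree_left (natDegree_signSumPoly_le t x _))
    ((natDegree_C_mul_le _ _).trans (natDegree_mul_signedPoly_add_le t x
      (natDegree_denCoeff_le t v D N m) (natDegree_numCoeff_le t v D N m))) ?_ ?_
  · simp only [Fintype.card_option, Fintype.card_prod, Fintype.card_fin, Fintype.card_bool]
    ring
  · rw [coeff_mul_add_eq_of_natDegree_le natDegree_left (natDegree_signSumPoly_le t x _),
      coeff_left, coeff_signSumPoly t hx, hsum, coeff_C_mul, coeff_mul_signedPoly_add t x
      (natDegree_denCoeff_le t v D N m) (natDegree_numCoeff_le t v D N m), coeff_denCoeff,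
      coeff_numCoeff]
    ring
  · simp only [eval_mul, eval_add, eval_sub, eval_one, eval_X, eval_C, eval_signedPoly_comp,
      eval_denCoeff, eval_numCoeff]
    rintro (_ | _ | p)
    · simp only [interpolationNode, eval_signSumPoly_zero, hsum, mul_zero, eval_signedPoly_zero hx]
      ring
    · simp only [interpolationNode, ← hD, ← hN]
      ring
    · simp only [interpolationNode]
      rw [eval_signSumPoly_signedVar t hx,
        signSum_eval_factorPoly t v (signedVar_removeNth_injective hx _),
        eval_signedPoly_signedVar, hD, hN, eval_signedPoly_removeNth x p v,
        eval_signedPoly_removeNth x p (t * v), eval_factorPoly]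
      have hp0 := signedVar_ne_zero hx p
      field_simp
      ring

theorem ne_signedVar {x : Fin n → F} (hx0 : ∀ i, x i ≠ 0) {w : F}
    (hw : ∀ i, w * x i ≠ 1 ∧ w ≠ x i) (p : Fin n × Bool) : w ≠ signedVar x p := by
  obtain ⟨i, _ | _⟩ := p
  · exact fun h => (hw i).1 ((mul_eq_one_iff_eq_inv₀ (hx0 i)).2 h)
  · exact (hw i).2

theorem eval_signedPoly_ne_zero {x : Fin n → F} {w : F} (hw : ∀ p, w ≠ signedVar x p) :
    (signedPoly x).eval w ≠ 0 := by
  rw [eval_signedPoly]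
  exact prod_ne_zero_iff.2 fun p _ => sub_ne_zero.2 (hw p)

theorem RC_eq_div (t : F) {x : Fin n → F} (hx0 : ∀ i, x i ≠ 0) (w : F) :
    RC t x w = (signedPoly x).eval (t * w) / (signedPoly x).eval w := by
  have mul_eq (z : F) (i : Fin n) :
      (1 - z * x i) * (1 - z / x i) = (z - x i) * (z - (x i)⁻¹) := by
    have hxi := hx0 i
    field_simp
    ring
  simp only [RC, div_mul_div_comm, mul_eq, prod_div_distrib,
    eval_signedPoly_eq_prod x fun _ => true, sgnVar, if_true]

theorem prod_div_eq_prod_eval_factorPoly_div (t : F) {x : Fin n → F} (hx0 : ∀ i, x i ≠ 0) {w : F}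
    (hw : ∀ p, w ≠ signedVar x p) (σ : Fin n → Bool) :
    ∏ i, (1 - t * w / sgnVar x σ i) / (1 - w / sgnVar x σ i) =
      (∏ i, (factorPoly t (sgnVar x σ i)).eval w) / (signedPoly x).eval w := by
  rw [eval_signedPoly_eq_prod x σ, ← prod_div_distrib]
  refine prod_congr rfl fun i _ => ?_
  have hy0 : sgnVar x σ i ≠ 0 := by
    unfold sgnVar
    split_ifs <;> simp [hx0 i]
  have hwy : 1 - sgnVar x σ i * w ≠ 0 := by
    refine sub_ne_zero.2 fun h => hw (i, !σ i) ?_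
    rw [signedVar_not, ← sgnVar_apply]
    exact eq_inv_of_mul_eq_one_right h.symm
  rw [eval_factorPoly, ← mul_div_mul_right _ _ hwy]
  congr 1
  · ring
  · field_simp
    ring

theorem sum_PhiC_mul_prod_div (t : F) {x : Fin n → F} (hx0 : ∀ i, x i ≠ 0) {u v : F}
    (hu : ∀ p, u ≠ signedVar x p) (hv : ∀ p, v ≠ signedVar x p) :
    ∑ σ : Fin n → Bool, PhiC t (sgnVar x σ) *
        ∏ i, ((1 - t * u / sgnVar x σ i) / (1 - u / sgnVar x σ i)) *
          ((1 - t * v / sgnVar x σ i) / (1 - v / sgnVar x σ i)) =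
      (signSumPoly t x fun y => (factorPoly t y).eval v).eval u /
        ((signedPoly x).eval u * (signedPoly x).eval v) := by
  simp only [prod_mul_distrib, prod_div_eq_prod_eval_factorPoly_div t hx0 hu,
    prod_div_eq_prod_eval_factorPoly_div t hx0 hv, eval_signSumPoly, signSum, smul_eq_mul, sum_div]
  refine sum_congr rfl fun σ _ => ?_
  ring

theorem eval_signSumPoly_div (t : F) {u v : F} {m : ℕ} {x : Fin (m + 2) → F}
    (hx : Function.Injective (signedVar x)) (hv0 : v ≠ 0) (hu : ∀ p, u ≠ signedVar x p)
    (hv : ∀ p, v ≠ signedVar x p) (huv : u ≠ v) (htuv : t * u * v ≠ 1) :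
    (signSumPoly t x fun y => (factorPoly t y).eval v).eval u /
        ((signedPoly x).eval u * (signedPoly x).eval v) =
      negPochhammer t m *
        (t ^ (2 * m + 3) * ((1 - t ^ 2 * u * v) / (1 - t * u * v)) +
          t ^ (m + 1) * ((u - t * v) / (u - v)) *
            ((signedPoly x).eval (t * u) / (signedPoly x).eval u) +
          t ^ (m + 1) * ((v - t * u) / (v - u)) *
            ((signedPoly x).eval (t * v) / (signedPoly x).eval v) +
          (1 - u * v) / (1 - t * u * v) * ((signedPoly x).eval (t * u) / (signedPoly x).eval u) *
            ((signedPoly x).eval (t * v) / (signedPoly x).eval v)) := by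
  have at_u := congrArg (eval u) (mul_signSumPoly_eval_factorPoly t hx hv0 hv)
  simp only [eval_mul, eval_add, eval_sub, eval_one, eval_X, eval_C, eval_signedPoly_comp,
    eval_denCoeff, eval_numCoeff] at at_u
  have hDu := eval_signedPoly_ne_zero hu
  have hDv := eval_signedPoly_ne_zero hv
  have hsub : u - v ≠ 0 := sub_ne_zero.2 huv
  have hmul : 1 - t * u * v ≠ 0 := sub_ne_zero.2 htuv.symm
  rw [← neg_sub u v]
  generalize (signedPoly x).eval (t * u) = Nu at *
  generalize (signedPoly x).eval (t * v) = Nv at *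
  generalize (signedPoly x).eval u = Du at *
  generalize (signedPoly x).eval v = Dv at *
  field_simp
  linear_combination at_u

end

/-- The `r = 2` case of the main rational identity (Corollary 7):
`T(Φ ∏_i ((1-tu/x_i)/(1-u/x_i))((1-tv/x_i)/(1-v/x_i)))
  = ∏_{i=1}^{n-2}(t^i+1) (t^{2n-1}(1-t²uv)/(1-tuv) + t^{n-1}((u-tv)/(u-v))R(u)
     + t^{n-1}((v-tu)/(v-u))R(v) + ((1-uv)/(1-tuv))R(u)R(v))`. -/
theorem stmt8 {F : Type*} [Field F] {n : ℕ} (hn : 2 ≤ n) (x : Fin n → F) (u v t : F)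
    (ht0 : t ≠ 0) (hx0 : ∀ i, x i ≠ 0) (hu0 : u ≠ 0) (hv0 : v ≠ 0)
    (hx2 : ∀ i, (x i) ^ 2 ≠ 1)
    (hxx : ∀ i j, i ≠ j → x i * x j ≠ 1 ∧ x i ≠ x j)
    (hux : ∀ i, u * x i ≠ 1 ∧ u ≠ x i)
    (hvx : ∀ i, v * x i ≠ 1 ∧ v ≠ x i)
    (huv : u ≠ v) (htuv : t * u * v ≠ 1) :
    ∑ σ : Fin n → Bool,
      PhiC t (sgnVar x σ) *
        ∏ i, ((1 - t * u / sgnVar x σ i) / (1 - u / sgnVar x σ i)) *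
          ((1 - t * v / sgnVar x σ i) / (1 - v / sgnVar x σ i))
      = (∏ i ∈ Finset.range (n - 2), (t ^ (i + 1) + 1)) *
        (t ^ (2 * n - 1) * ((1 - t ^ 2 * u * v) / (1 - t * u * v)) +
          t ^ (n - 1) * ((u - t * v) / (u - v)) * RC t x u +
          t ^ (n - 1) * ((v - t * u) / (v - u)) * RC t x v +
          ((1 - u * v) / (1 - t * u * v)) * RC t x u * RC t x v) := by
  obtain ⟨m, rfl⟩ := Nat.exists_eq_add_of_le' hn
  have hx : Function.Injective (signedVar x) := signedVar_injective_of_ne hx0 hx2 hxx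
  have hu : ∀ p, u ≠ signedVar x p := ne_signedVar hx0 hux
  have hv : ∀ p, v ≠ signedVar x p := ne_signedVar hx0 hvx
  rw [sum_PhiC_mul_prod_div t hx0 hu hv, eval_signSumPoly_div t hx hv0 hu hv huv htuv,
    RC_eq_div t hx0, RC_eq_div t hx0]
  rfl
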